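/- Let F be a positive CNF formula with k ≥ 1 variables and n ≥ 1 clauses (each clause a nonempty subset of the variables). Then every minimum connected dominating set of G_F contains exactly three vertices from each gadget B_i, i ∈ [k]. -/

import Mathlib

namespace CDG

/-- Vertices of the graph `B`. -/
inductive BVert : Type
  | a | e | b | b' | h | k | f1 | g1 | f2 | g2

/-- The edges of the graph `B`. -/
def BRel : BVert → BVert → Prop
  | .a, .e => True
  | .e, .b => True
  | .b, .b' => True
  | .a, .h => True
  | .h, .e => True
  | .e, .f1 => True
  | .f1, .b => True
  | .b, .f2 => True
  | .f2, .e => True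
  | .e, .g1 => True
  | .g1, .f1 => True
  | .e, .g2 => True
  | .g2, .f2 => True
  | .h, .k => True
  | .k, .a => True
  | _, _ => False

/-- The graph `B`. -/
def graphB : SimpleGraph BVert := SimpleGraph.fromRel BRel

/-- `S` is a connected dominating set of `G`: every vertex is in `S` or adjacent to a
vertex of `S`, and the subgraph induced by `S` is connected. -/
def IsConnDomSet {V : Type*} (G : SimpleGraph V) (S : Set V) : Prop :=
  (∀ v : V, v ∈ S ∨ ∃ u ∈ S, G.Adj u v) ∧ (G.induce S).Connected

/-- The connected domination number of `G`. -/
noncomputable def connDomNum {V : Type*} (G : SimpleGraph V) : ℕ :=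
  sInf {m | ∃ S : Set V, IsConnDomSet G S ∧ S.ncard = m}

/-- Vertices of the graph `H n`: `u i` is `u_i` for `0 ≤ i ≤ n+1`, `x t` is `x_{t+1}` and
`y t` is `y_{t+1}` for `0 ≤ t ≤ n-2`. -/
inductive HVert (n : ℕ) : Type
  | u : Fin (n + 2) → HVert n
  | x : Fin (n - 1) → HVert n
  | y : Fin (n - 1) → HVert n

/-- The edges of the graph `H n`. -/
def HRel (n : ℕ) : HVert n → HVert n → Prop
  | .u i, .u j => (j : ℕ) = (i : ℕ) + 1
  | .u i, .x t => (i : ℕ) = (t : ℕ) + 1 ∨ (i : ℕ) = (t : ℕ) + 2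
  | .x t, .y s => t = s
  | .y s, .u i => (i : ℕ) = (s : ℕ) + 2
  | _, _ => False

/-- The graph `H n`. -/
def graphH (n : ℕ) : SimpleGraph (HVert n) := SimpleGraph.fromRel (HRel n)

/-- Vertices of the graph `C m`: `cc i` is `c^{i+1}` and `dd i` is `d^{i+1}` for `0 ≤ i ≤ m-1`. -/
inductive CVert (m : ℕ) : Type
  | c : CVert m
  | d : CVert m
  | cc : Fin m → CVert m
  | dd : Fin m → CVert m

/-- The edges of the graph `C m`. -/
def CRel (m : ℕ) : CVert m → CVert m → Prop
  | .c, .d => True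
  | .c, .dd _ => True
  | .cc i, .dd j => i = j
  | _, _ => False

/-- The graph `C m`. -/
def graphC (m : ℕ) : SimpleGraph (CVert m) := SimpleGraph.fromRel (CRel m)

/-- Vertices of the graph `A`. -/
inductive AVert : Type
  | p1 | p2 | p3 | q1 | q2 | r1 | r2

/-- The edges of the graph `A`. -/
def ARel : AVert → AVert → Prop
  | .p1, .p2 => True
  | .p2, .p3 => True
  | .p1, .q1 => True
  | .q1, .r1 => True
  | .p2, .q1 => True
  | .p2, .r1 => True
  | .p2, .q2 => True
  | .q2, .r2 => True
  | .p3, .q2 => True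
  | .p3, .r2 => True
  | _, _ => False

/-- Vertices of the graph `G_F`, for a formula with `k` variables and `n` clauses:
`k` copies of `B`, `n` copies of `C n`, one copy of `H (2n+7)`, and a copy of `A`
exactly when `k` is odd (realized as `AVert × Fin (k % 2)`). -/
abbrev GVert (k n : ℕ) : Type :=
  (Fin k × BVert) ⊕ (Fin n × CVert n) ⊕ HVert (2 * n + 7) ⊕ (AVert × Fin (k % 2))

/-- The edges of the graph `G_F`, where the formula `F` assigns to each clause `j`
the (nonempty) set of variables appearing in it. -/
def GRel (k n : ℕ) (F : Fin n → Finset (Fin k)) : GVert k n → GVert k n → Prop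
  | .inl (i, v), .inl (i', w) => i = i' ∧ BRel v w
  | .inr (.inl (j, v)), .inr (.inl (j', w)) => j = j' ∧ CRel n v w
  | .inr (.inr (.inl v)), .inr (.inr (.inl w)) => HRel (2 * n + 7) v w
  | .inr (.inr (.inr (v, _))), .inr (.inr (.inr (w, _))) => ARel v w
  | .inr (.inl (j, v)), .inl (i, w) =>
      i ∈ F j ∧ w = .a ∧ (v = .c ∨ ∃ t, v = .cc t)
  | .inr (.inr (.inl v)), .inl (i, w) =>
      v = .u ⟨0, by omega⟩ ∧ (w = .a ∨ w = .b)
  | .inr (.inr (.inr (v, _))), .inr (.inr (.inl w)) =>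
      v = .p1 ∧ w = .u ⟨0, by omega⟩
  | _, _ => False

/-- The graph `G_F`. -/
def graphGF (k n : ℕ) (F : Fin n → Finset (Fin k)) : SimpleGraph (GVert k n) :=
  SimpleGraph.fromRel (GRel k n F)

/-- Vertices of the graph `G'_F`, for a formula with `k` variables and `n` clauses:
`k` copies of `B`, `n` copies of `C n`, one copy of `H 6`, and a copy of `A`
exactly when `k` is odd (realized as `AVert × Fin (k % 2)`). -/
abbrev GVert' (k n : ℕ) : Type :=
  (Fin k × BVert) ⊕ (Fin n × CVert n) ⊕ HVert 6 ⊕ (AVert × Fin (k % 2))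

/-- The edges of the graph `G'_F`. -/
def GRel' (k n : ℕ) (F : Fin n → Finset (Fin k)) : GVert' k n → GVert' k n → Prop
  | .inl (i, v), .inl (i', w) => i = i' ∧ BRel v w
  | .inr (.inl (j, v)), .inr (.inl (j', w)) => j = j' ∧ CRel n v w
  | .inr (.inr (.inl v)), .inr (.inr (.inl w)) => HRel 6 v w
  | .inr (.inr (.inr (v, _))), .inr (.inr (.inr (w, _))) => ARel v w
  | .inr (.inl (j, v)), .inl (i, w) =>
      i ∈ F j ∧ w = .a ∧ (v = .c ∨ ∃ t, v = .cc t)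
  | .inr (.inr (.inl v)), .inl (i, w) =>
      v = .u ⟨7, by omega⟩ ∧ (w = .a ∨ w = .b)
  | .inr (.inr (.inr (v, _))), .inr (.inr (.inl w)) =>
      v = .p1 ∧ w = .u ⟨7, by omega⟩
  | _, _ => False

/-- The graph `G'_F`. -/
def graphGF' (k n : ℕ) (F : Fin n → Finset (Fin k)) : SimpleGraph (GVert' k n) :=
  SimpleGraph.fromRel (GRel' k n F)

/-!
Let `φ` embed a graph `H` into `G`, and call `w` a portal if `φ w` has a neighbour outside the
image of `φ`. If `D` is a connected dominating set of `H` containing all portals, then exchanging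
the part of a connected dominating set of `G` inside the image of `φ` for `φ '' D` gives a
connected dominating set again, so a minimum one has at most `D.ncard` vertices inside the image.

The portals of `B` lie in its connected dominating set `{a, e, b}`, which bounds the number by
three from above. Conversely, `k` and `g¹` are not portals and have disjoint closed neighbourhoods
inside `B`, each of which contains a vertex of `S`; moreover `S` contains `b`, which lies in neither
of them, because `b` is the only neighbour of a leaf.
-/

section ConnDomSet

variable {V : Type*} {G : SimpleGraph V} {S : Set V}

theorem IsConnDomSet.mem_of_neighborSet_eq_singleton (hS : IsConnDomSet G S) (hnt : S.Nontrivial)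
    {u v : V} (hv : G.neighborSet v = {u}) : u ∈ S := by
  have hu : ∀ x, G.Adj v x → x = u := fun x hx ↦ hv.subset hx
  rcases hS.1 v with hvS | ⟨x, hxS, hadj⟩
  · have := hnt.coe_sort
    obtain ⟨⟨x, hxS⟩, hadj⟩ := hS.2.preconnected.exists_adj_of_nontrivial ⟨v, hvS⟩
    exact hu x hadj ▸ hxS
  · exact hu x hadj.symm ▸ hxS

variable {P D : Set V}

theorem IsConnDomSet.connected_induce_diff_union (hS : IsConnDomSet G S)
    (hD : (G.induce D).Connected) (hPD : ∀ u ∉ P, ∀ v ∈ P, G.Adj u v → v ∈ D) :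
    (G.induce (S \ P ∪ D)).Connected := by
  obtain ⟨⟨d, hd⟩⟩ := hD.nonempty
  have reachable_of_mem (v : V) (hv : v ∈ D) :
      (G.induce (S \ P ∪ D)).Reachable ⟨v, .inr hv⟩ ⟨d, .inr hd⟩ :=
    (hD.preconnected ⟨v, hv⟩ ⟨d, hd⟩).map (G.induceHomOfLE Set.subset_union_right).toHom
  have reachable_of_adj {u v : V} (hu : u ∈ S \ P ∪ D) (hv : v ∈ D) (h : G.Adj u v) :
      (G.induce (S \ P ∪ D)).Reachable ⟨u, hu⟩ ⟨d, .inr hd⟩ :=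
    (SimpleGraph.Adj.reachable (SimpleGraph.induce_adj.mpr h)).trans (reachable_of_mem v hv)
  obtain ⟨y, hyS, hy⟩ : ∃ y ∈ S, y = d ∨ G.Adj y d := by
    rcases hS.1 d with h | ⟨y, hyS, h⟩
    exacts [⟨d, h, .inl rfl⟩, ⟨y, hyS, .inr h⟩]
  -- Walk inside `S` from `x` towards `y`; the first step into `P`, if any, lands in `D`.
  have reachable_of_notMem (x : S) (hxP : x.1 ∉ P) :
      (G.induce (S \ P ∪ D)).Reachable ⟨x, .inl ⟨x.2, hxP⟩⟩ ⟨d, .inr hd⟩ := by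
    have hxy := (SimpleGraph.reachable_iff_reflTransGen x ⟨y, hyS⟩).mp (hS.2.preconnected _ _)
    induction hxy using Relation.ReflTransGen.head_induction_on with
    | refl =>
      obtain rfl | hadj := hy
      exacts [.refl _, reachable_of_adj _ hd hadj]
    | @head x z hxz _ ih =>
      by_cases hzP : z.1 ∈ P
      · exact reachable_of_adj _ (hPD x hxP z hzP hxz) hxz
      · have hadj : (G.induce (S \ P ∪ D)).Adj ⟨x, .inl ⟨x.2, hxP⟩⟩ ⟨z, .inl ⟨z.2, hzP⟩⟩ := hxz
        exact hadj.reachable.trans (ih hzP)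
  rw [SimpleGraph.connected_iff_exists_forall_reachable]
  refine ⟨⟨d, .inr hd⟩, ?_⟩
  rintro ⟨x, ⟨hxS, hxP⟩ | hxD⟩
  exacts [(reachable_of_notMem ⟨x, hxS⟩ hxP).symm, (reachable_of_mem x hxD).symm]

theorem IsConnDomSet.diff_union (hS : IsConnDomSet G S) (hD : (G.induce D).Connected)
    (hdom : ∀ v ∈ P, v ∈ D ∨ ∃ u ∈ D, G.Adj u v)
    (hPD : ∀ u ∉ P, ∀ v ∈ P, G.Adj u v → v ∈ D) : IsConnDomSet G (S \ P ∪ D) := by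
  refine ⟨fun v ↦ ?_, hS.connected_induce_diff_union hD hPD⟩
  by_cases hvP : v ∈ P
  · exact (hdom v hvP).imp .inr fun ⟨u, hu, huv⟩ ↦ ⟨u, .inr hu, huv⟩
  rcases hS.1 v with hvS | ⟨u, huS, huv⟩
  · exact .inl (.inl ⟨hvS, hvP⟩)
  · by_cases huP : u ∈ P
    · exact .inr ⟨u, .inr (hPD v hvP u huP huv.symm), huv⟩
    · exact .inr ⟨u, .inl ⟨huS, huP⟩, huv⟩

end ConnDomSet

section Portals

variable {V W : Type*} {G : SimpleGraph V} {H : SimpleGraph W} {S : Set V}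

/-- The portals of a gadget placed in `G` by `f`: the vertices of the gadget through which it is
attached to the rest of `G`. They are taken in the gadget, not in `G`. -/
def portals (G : SimpleGraph V) (f : W → V) : Set W :=
  {w | ∃ v ∉ Set.range f, G.Adj (f w) v}

theorem connected_induce_image (φ : H →g G) {D : Set W} (hD : (H.induce D).Connected) :
    (G.induce (φ '' D)).Connected :=
  hD.map (SimpleGraph.induceHom φ (Set.mapsTo_image φ D)) <|
    (Set.mapsTo_image φ D).restrict_surjective_iff.mpr (Set.surjOn_image φ D)

theorem IsConnDomSet.diff_range_union_image (hS : IsConnDomSet G S) (φ : H →g G) {D : Set W}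
    (hD : IsConnDomSet H D) (hφ : portals G φ ⊆ D) :
    IsConnDomSet G (S \ Set.range φ ∪ φ '' D) := by
  refine hS.diff_union (connected_induce_image φ hD.2) ?_ ?_
  · rintro _ ⟨w, rfl⟩
    exact (hD.1 w).imp (Set.mem_image_of_mem φ) fun ⟨w', hw', hadj⟩ ↦
      ⟨φ w', Set.mem_image_of_mem φ hw', φ.map_adj hadj⟩
  · rintro u hu _ ⟨w, rfl⟩ hadj
    exact Set.mem_image_of_mem φ (hφ ⟨u, hu, hadj.symm⟩)

theorem IsConnDomSet.connDomNum_le (hS : IsConnDomSet G S) : connDomNum G ≤ S.ncard :=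
  Nat.sInf_le ⟨S, hS, rfl⟩

theorem IsConnDomSet.ncard_inter_range_le (hS : IsConnDomSet G S) (hfin : S.Finite)
    (hmin : S.ncard = connDomNum G) (φ : H →g G) {D : Set W} (hD : IsConnDomSet H D)
    (hDfin : D.Finite) (hφ : portals G φ ⊆ D) : (S ∩ Set.range φ).ncard ≤ D.ncard := by
  have hexchange : S.ncard ≤ (S \ Set.range φ).ncard + D.ncard :=
    calc S.ncard = connDomNum G := hmin
      _ ≤ (S \ Set.range φ ∪ φ '' D).ncard := (hS.diff_range_union_image φ hD hφ).connDomNum_le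
      _ ≤ (S \ Set.range φ).ncard + (φ '' D).ncard := Set.ncard_union_le _ _
      _ ≤ (S \ Set.range φ).ncard + D.ncard := by gcongr; exact Set.ncard_image_le hDfin
  have hsplit := Set.ncard_inter_add_ncard_sdiff_eq_ncard S (Set.range φ) hfin
  lia

theorem neighborSet_eq_image_of_notMem_portals (φ : H ↪g G) {w : W} (hw : w ∉ portals G φ) :
    G.neighborSet (φ w) = φ '' H.neighborSet w := by
  ext v
  constructor
  · intro hv
    obtain ⟨w', rfl⟩ : v ∈ Set.range φ := by
      by_contra hv'
      exact hw ⟨v, hv', hv⟩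
    exact Set.mem_image_of_mem φ (φ.map_adj_iff.mp hv)
  · rintro ⟨w', hw', rfl⟩
    exact φ.map_adj_iff.mpr hw'

theorem IsConnDomSet.exists_mem_insert_neighborSet (hS : IsConnDomSet G S) (φ : H ↪g G) {w : W}
    (hw : w ∉ portals G φ) : ∃ w' ∈ insert w (H.neighborSet w), φ w' ∈ S := by
  rcases hS.1 (φ w) with hwS | ⟨u, huS, hadj⟩
  · exact ⟨w, .inl rfl, hwS⟩
  · obtain ⟨w', hw', rfl⟩ : u ∈ φ '' H.neighborSet w :=
      neighborSet_eq_image_of_notMem_portals φ hw ▸ hadj.symm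
    exact ⟨w', .inr hw', huS⟩

end Portals

section GraphB

instance : Finite BVert :=
  Set.finite_univ_iff.mp <|
    (Set.toFinite {.a, .e, .b, .b', .h, .k, .f1, .g1, .f2, .g2}).subset fun v _ ↦ by
      cases v <;> simp

theorem graphB_neighborSet_b' : graphB.neighborSet .b' = {.b} := by
  ext w; cases w <;> simp [graphB, BRel]

theorem graphB_neighborSet_k : graphB.neighborSet .k = {.a, .h} := by
  ext w; cases w <;> simp [graphB, BRel]

theorem graphB_neighborSet_g1 : graphB.neighborSet .g1 = {.e, .f1} := by
  ext w; cases w <;> simp [graphB, BRel]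

theorem isConnDomSet_graphB_aeb : IsConnDomSet graphB {.a, .e, .b} := by
  constructor
  · intro v
    cases v <;> simp [graphB, BRel]
  · have hunion : ({.a, .e, .b} : Set BVert) = {.a, .e} ∪ {.e, .b} := by grind
    rw [hunion]
    refine SimpleGraph.induce_union_connected ?_ ?_ ⟨.e, by simp⟩ <;>
      exact (SimpleGraph.induce_pair_connected_of_adj (by simp [graphB, BRel])).preconnected

variable {V : Type*} {G : SimpleGraph V} {S : Set V}

theorem IsConnDomSet.three_le_ncard_inter_range (hS : IsConnDomSet G S) (φ : graphB ↪g G)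
    (hφ : portals G φ ⊆ {.a, .b}) : 3 ≤ (S ∩ Set.range φ).ncard := by
  obtain ⟨x, hx, hxS⟩ := hS.exists_mem_insert_neighborSet φ (w := .k) fun h ↦ by simpa using hφ h
  obtain ⟨y, hy, hyS⟩ := hS.exists_mem_insert_neighborSet φ (w := .g1) fun h ↦ by simpa using hφ h
  simp only [graphB_neighborSet_k, graphB_neighborSet_g1, Set.mem_insert_iff,
    Set.mem_singleton_iff] at hx hy
  have hxy : x ≠ y := by grind
  have hbS : φ .b ∈ S := by
    refine hS.mem_of_neighborSet_eq_singleton ⟨_, hxS, _, hyS, φ.injective.ne hxy⟩ (v := φ .b') ?_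
    rw [neighborSet_eq_image_of_notMem_portals φ fun h ↦ by simpa using hφ h,
      graphB_neighborSet_b', Set.image_singleton]
  rw [← Set.image_preimage_eq_inter_range, Set.ncard_image_of_injective _ φ.injective]
  exact (Set.two_lt_ncard_iff (Set.toFinite _)).mpr
    ⟨x, y, .b, hxS, hyS, hbS, hxy, by grind, by grind⟩

end GraphB

section GraphGF

variable {k n : ℕ}

instance (m : ℕ) : Finite (CVert m) :=
  .of_surjective (Sum.elim (fun b : Bool ↦ cond b .c .d) (Sum.elim .cc .dd)) fun
    | .c => ⟨.inl true, rfl⟩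
    | .d => ⟨.inl false, rfl⟩
    | .cc t => ⟨.inr (.inl t), rfl⟩
    | .dd t => ⟨.inr (.inr t), rfl⟩

instance (m : ℕ) : Finite (HVert m) :=
  .of_surjective (Sum.elim .u (Sum.elim .x .y)) fun
    | .u t => ⟨.inl t, rfl⟩
    | .x t => ⟨.inr (.inl t), rfl⟩
    | .y t => ⟨.inr (.inr t), rfl⟩

instance : Finite AVert :=
  Set.finite_univ_iff.mp <|
    (Set.toFinite {.p1, .p2, .p3, .q1, .q2, .r1, .r2}).subset fun v _ ↦ by cases v <;> simp

theorem graphGF_adj_inl {F : Fin n → Finset (Fin k)} {i : Fin k} {w w' : BVert} :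
    (graphGF k n F).Adj (.inl (i, w)) (.inl (i, w')) ↔ graphB.Adj w w' := by
  simp [graphGF, graphB, GRel]

/-- The copy `B_i` of the graph `B` inside `G_F`, as an induced subgraph. -/
def gadgetB (F : Fin n → Finset (Fin k)) (i : Fin k) : graphB ↪g graphGF k n F where
  toFun w := .inl (i, w)
  inj' _ _ h := by simpa using h
  map_rel_iff' := graphGF_adj_inl

@[simp]
theorem gadgetB_apply (F : Fin n → Finset (Fin k)) (i : Fin k) (w : BVert) :
    gadgetB F i w = .inl (i, w) :=
  rfl

theorem portals_gadgetB_subset (F : Fin n → Finset (Fin k)) (i : Fin k) :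
    portals (graphGF k n F) (gadgetB F i) ⊆ {.a, .b} := by
  rintro w ⟨v, hv, -, hadj | hadj⟩ <;>
    rcases v with ⟨i', w'⟩ | ⟨j, v⟩ | v | v <;> simp_all [GRel]

end GraphGF

theorem min_connDomSet_three_in_each_B_general {V : Type*} {G : SimpleGraph V} (φ : graphB ↪g G)
    (hφ : portals G φ ⊆ {.a, .b}) {S : Set V} (hfin : S.Finite) (hS : IsConnDomSet G S)
    (hmin : S.ncard = connDomNum G) : (S ∩ Set.range φ).ncard = 3 := by
  refine le_antisymm ?_ (hS.three_le_ncard_inter_range φ hφ)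
  calc (S ∩ Set.range φ).ncard
      ≤ ({.a, .e, .b} : Set BVert).ncard :=
        hS.ncard_inter_range_le hfin hmin φ.toHom isConnDomSet_graphB_aeb (Set.toFinite _)
          (hφ.trans (by grind))
    _ = 3 := Set.ncard_eq_three.mpr ⟨_, _, _, by simp, by simp, by simp, rfl⟩

theorem min_connDomSet_three_in_each_B (k n : ℕ) (hk : 1 ≤ k) (hn : 1 ≤ n)
    (F : Fin n → Finset (Fin k)) (hF : ∀ j, (F j).Nonempty)
    (S : Set (GVert k n)) (hS : IsConnDomSet (graphGF k n F) S)
    (hmin : S.ncard = connDomNum (graphGF k n F)) (i : Fin k) :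
    (S ∩ {v : GVert k n | ∃ w : BVert, v = .inl (i, w)}).ncard = 3 := by
  have hrange : {v : GVert k n | ∃ w : BVert, v = .inl (i, w)} = Set.range (gadgetB F i) :=
    Set.ext fun _ ↦ exists_congr fun _ ↦ eq_comm
  rw [hrange]
  exact min_connDomSet_three_in_each_B_general (gadgetB F i) (portals_gadgetB_subset F i)
    S.toFinite hS hmin

end CDG
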